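/- Let M ≥ 1, let p̂ ∈ ℝ^M with p̂_m > 0 for all m and Σ_m p̂_m = 1, let ℓ ∈ ℝ^M, let φ : ℝ → ℝ, let θ ≥ 0, and let φStar : ℝ → ℝ satisfy the Fenchel–Young inequality u·y − φ(u) ≤ φStar(y) for all u ≥ 0 and all y ∈ ℝ. Suppose w ∈ ℝ^M satisfies w_m ≥ 0 for all m, Σ_m w_m p̂_m = 1, and Σ_m φ(w_m) p̂_m ≤ θ. Then for every λ > 0 and every ν ∈ ℝ, Σ_m ℓ_m w_m p̂_m ≥ ν − θ·λ − λ·Σ_m p̂_m · φStar((ν − ℓ_m)/λ). -/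

import Mathlib

/-!
Apply the Fenchel–Young inequality in each scenario at `u = w m`, `y = (ν - ℓ m) / lam`, and
average it with the weights `lam * phat m`. Since `∑ w m * phat m = 1`, the linear part sums to
`ν - ∑ ℓ m * w m * phat m`, and the divergence part is at most `lam * θ`.
-/

/-- Weak duality for the φ-divergence distributionally robust
problem. If `φStar` satisfies the Fenchel–Young inequality
`u y − φ(u) ≤ φStar(y)` for all `u ≥ 0` and `y ∈ ℝ`, and `w` is a feasible
density (`wₘ ≥ 0`, `∑ wₘ p̂ₘ = 1`, `∑ φ(wₘ) p̂ₘ ≤ θ`), then every dual pair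
`(λ, ν)` with `λ > 0` gives the lower bound
`∑ ℓₘ wₘ p̂ₘ ≥ ν − θλ − λ ∑ p̂ₘ φStar((ν − ℓₘ)/λ)`. -/
theorem phi_divergence_weak_duality (M : ℕ) (hM : 1 ≤ M)
    (phat : Fin M → ℝ) (hphat : ∀ m, 0 < phat m) (hsum : ∑ m, phat m = 1)
    (ℓ : Fin M → ℝ) (φ φStar : ℝ → ℝ) (θ : ℝ) (hθ : 0 ≤ θ)
    (hFY : ∀ u : ℝ, 0 ≤ u → ∀ y : ℝ, u * y - φ u ≤ φStar y)
    (w : Fin M → ℝ) (hw : ∀ m, 0 ≤ w m)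
    (hw1 : ∑ m, w m * phat m = 1)
    (hwθ : ∑ m, φ (w m) * phat m ≤ θ)
    (lam : ℝ) (hlam : 0 < lam) (ν : ℝ) :
    ν - θ * lam - lam * ∑ m, phat m * φStar ((ν - ℓ m) / lam) ≤
      ∑ m, ℓ m * w m * phat m := by
  -- Fenchel–Young at `u = w m`, `y = (ν - ℓ m) / lam`, scaled by `lam * phat m > 0`.
  have key : ∀ m, ν * (w m * phat m) - ℓ m * w m * phat m - lam * (φ (w m) * phat m)
      ≤ lam * (phat m * φStar ((ν - ℓ m) / lam)) := by
    intro m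
    have h := mul_le_mul_of_nonneg_left (hFY (w m) (hw m) ((ν - ℓ m) / lam))
      (mul_pos hlam (hphat m)).le
    have e : lam * phat m * (w m * ((ν - ℓ m) / lam) - φ (w m))
        = ν * (w m * phat m) - ℓ m * w m * phat m - lam * (φ (w m) * phat m) := by
      field_simp
    linarith
  have hs := Finset.sum_le_sum fun m (_ : m ∈ Finset.univ) => key m
  rw [Finset.sum_sub_distrib, Finset.sum_sub_distrib, ← Finset.mul_sum, ← Finset.mul_sum,
    ← Finset.mul_sum, hw1] at hs
  have hb := mul_le_mul_of_nonneg_left hwθ hlam.le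
  linarith
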